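/- arXiv:2504.13430 — 2 statements merged into one kernel-verified Lean document; each statement's English description precedes it below -/
import Mathlib

section
/- (Hardness from Nash to harmonic welfare.) For every ε > 0 and every δ ∈ (0,1] there exists n₀ ∈ ℕ such that for every n ≥ n₀, every real p with −1 ≤ p ≤ −δ, and every deterministic online algorithm A for n agents, there exists an instance v with unit monopolist utilities, in which for every item k there is some w_k ≥ 0 with v k a ∈ {0, w_k} for all agents a, such that OPT_p(v) ≥ n^{|p|/(|p|+1) − ε} · ALG_{A,p}(v). -/
open Real

/-- The `p`-mean welfare of a utility profile, taken to be `0` when `p < 0`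
and some utility is zero. -/
noncomputable def pMeanWelfare (n : ℕ) (p : ℝ) (u : Fin n → ℝ) : ℝ :=
  if p < 0 ∧ ∃ a, u a = 0 then 0
  else ((1 / (n : ℝ)) * ∑ a, u a ^ p) ^ (1 / p)

/-- The optimal `p`-mean welfare over all feasible (fractional) allocations. -/
noncomputable def OPTwelfare (n m : ℕ) (p : ℝ) (v : Fin m → Fin n → ℝ) : ℝ :=
  sSup { w : ℝ | ∃ y : Fin m → Fin n → ℝ,
    (∀ k a, 0 ≤ y k a) ∧ (∀ k, ∑ a, y k a ≤ 1) ∧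
    w = pMeanWelfare n p (fun a => ∑ k, v k a * y k a) }

/-- The utilities produced by a deterministic online algorithm `A` on instance `v`:
item `k` is allocated according to `A k` applied to the value history of items `0,…,k`. -/
noncomputable def onlineUtilities (n m : ℕ)
    (A : (k : ℕ) → (Fin (k + 1) → Fin n → ℝ) → (Fin n → ℝ))
    (v : Fin m → Fin n → ℝ) : Fin n → ℝ :=
  fun a => ∑ k : Fin m, v k a *
    A k.1 (fun i : Fin (k.1 + 1) => v (Fin.castLE k.isLt i)) a

/-- The `p`-mean welfare achieved by the online algorithm `A` on instance `v`. -/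
noncomputable def ALGwelfare (n m : ℕ) (p : ℝ)
    (A : (k : ℕ) → (Fin (k + 1) → Fin n → ℝ) → (Fin n → ℝ))
    (v : Fin m → Fin n → ℝ) : ℝ :=
  pMeanWelfare n p (onlineUtilities n m A v)

/-!
Write `q = -p ∈ (0, 1]`. The adversary presents items of geometrically decreasing value to a
halving sequence `S 0 ⊇ S 1 ⊇ …` of sets of agents: item `k` is worth `2^{-(k+1)}` to each agent of
`S k`, and `S (k + 1)` is the half of `S k` to which the algorithm gave least, so that each of its
members receives at most twice the average share. Since `|S k| ≈ n / 2^k`, a surviving agent gains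
only `O(1 / n)` per item. After `L` halvings one last item of value `2^{-L}` is presented to `S L`,
and finally each agent gets a personal item completing its monopolist utility to `1`; it is
worthless to the agents of `S L` and worth `2^{-(i+1)}` to an agent that was last seen in `S i`.

Online, the agents of `S (L + 1)` have utility `O(L / n)`, so `∑ u^{-q}` is at least of order
`(n / 2^L) · n^q / L`. Offline, one splits the common items evenly within `S L` and gives the
personal items to their owners; as `q ≤ 1`, the agents outside `S L` contribute `O(n L)` to
`∑ u^{-q}`, and those of `S L` contribute `|S L|^{1+q}`. With `2^L ≈ n^{q/(q+1)}` the latter is at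
most `n`, the power sums differ by a factor `n^{q²/(q+1)} / O(L²)`, and taking `q`-th roots
gives `n^{q/(q+1)}` up to a polylogarithmic factor.
-/

open Finset

section LowerHalf

lemma exists_subset_card_eq_forall_le {ι α : Type*} [DecidableEq ι] [LinearOrder α]
    (f : ι → α) (T : Finset ι) {k : ℕ} (hk : k ≤ #T) :
    ∃ H ⊆ T, #H = k ∧ ∀ b ∈ H, ∀ c ∈ T \ H, f b ≤ f c := by
  induction k with
  | zero => exact ⟨∅, by simp⟩
  | succ k ih =>
    obtain ⟨H, hHT, rfl, hle⟩ := ih (Nat.le_of_succ_le hk)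
    obtain ⟨x, hx, hmin⟩ := exists_min_image (T \ H) f
      (sdiff_nonempty.2 fun hTH => by have := card_le_card hTH; omega)
    obtain ⟨hxT, hxH⟩ := mem_sdiff.1 hx
    refine ⟨insert x H, insert_subset hxT hHT, card_insert_of_notMem hxH, fun b hb c hc => ?_⟩
    have hc' : c ∈ T \ H := sdiff_subset_sdiff Subset.rfl (subset_insert x H) hc
    rcases mem_insert.1 hb with rfl | hb
    · exact hmin c hc'
    · exact hle b hb c hc'

variable {ι : Type*} [DecidableEq ι] {f : ι → ℝ} {T : Finset ι}

/-- Half of the elements of `T` (rounded down), chosen so that `f` is smallest on them. -/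
noncomputable def lowerHalf (f : ι → ℝ) (T : Finset ι) : Finset ι :=
  (exists_subset_card_eq_forall_le f T (Nat.div_le_self #T 2)).choose

lemma lowerHalf_subset : lowerHalf f T ⊆ T :=
  (exists_subset_card_eq_forall_le f T (Nat.div_le_self #T 2)).choose_spec.1

lemma card_lowerHalf : #(lowerHalf f T) = #T / 2 :=
  (exists_subset_card_eq_forall_le f T (Nat.div_le_self #T 2)).choose_spec.2.1

lemma le_of_mem_lowerHalf {b c : ι} (hb : b ∈ lowerHalf f T) (hc : c ∈ T \ lowerHalf f T) :
    f b ≤ f c :=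
  (exists_subset_card_eq_forall_le f T (Nat.div_le_self #T 2)).choose_spec.2.2 b hb c hc

lemma mul_card_le_two_mul_sum_of_mem_lowerHalf (hf : ∀ a ∈ T, 0 ≤ f a) {b : ι}
    (hb : b ∈ lowerHalf f T) : f b * #T ≤ 2 * ∑ a ∈ T, f a := by
  have hcard : #T ≤ 2 * #(T \ lowerHalf f T) := by
    rw [card_sdiff_of_subset lowerHalf_subset, card_lowerHalf]
    omega
  have hb0 : 0 ≤ f b := hf b (lowerHalf_subset hb)
  calc f b * #T ≤ f b * (2 * #(T \ lowerHalf f T)) := by gcongr; exact_mod_cast hcard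
    _ = 2 * (#(T \ lowerHalf f T) • f b) := by rw [nsmul_eq_mul]; ring
    _ ≤ 2 * ∑ a ∈ T \ lowerHalf f T, f a := by
      gcongr
      exact card_nsmul_le_sum _ _ _ fun c hc => le_of_mem_lowerHalf hb hc
    _ ≤ 2 * ∑ a ∈ T, f a := by
      exact mul_le_mul_of_nonneg_left
        (sum_le_sum_of_subset_of_nonneg sdiff_subset fun a ha _ => hf a ha) zero_le_two

end LowerHalf

section PMeanWelfare

variable {n : ℕ} {p : ℝ} {u v : Fin n → ℝ}

lemma pMeanWelfare_of_pos (hu : ∀ a, 0 < u a) :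
    pMeanWelfare n p u = (1 / (n : ℝ) * ∑ a, u a ^ p) ^ (1 / p) :=
  if_neg fun ⟨_, a, ha⟩ => (hu a).ne' ha

lemma pMeanWelfare_nonneg (hu : ∀ a, 0 ≤ u a) : 0 ≤ pMeanWelfare n p u := by
  have hsum : 0 ≤ ∑ a, u a ^ p := sum_nonneg fun a _ => rpow_nonneg (hu a) p
  unfold pMeanWelfare
  split_ifs <;> positivity

lemma pMeanWelfare_const_mul (hp : p ≠ 0) {c : ℝ} (hc : 0 < c) (hu : ∀ a, 0 ≤ u a) :
    pMeanWelfare n p (fun a => c * u a) = c * pMeanWelfare n p u := by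
  have hsum : 0 ≤ ∑ a, u a ^ p := sum_nonneg fun a _ => rpow_nonneg (hu a) p
  have hroot : (c ^ p) ^ (1 / p) = c := by rw [← rpow_mul hc.le, mul_one_div_cancel hp, rpow_one]
  simp only [pMeanWelfare, mul_eq_zero, hc.ne', false_or]
  split_ifs
  · rw [mul_zero]
  · simp only [mul_rpow hc.le (hu _), ← mul_sum]
    rw [mul_left_comm, mul_rpow (by positivity) (by positivity), hroot]

lemma pMeanWelfare_le_of_sum_rpow_le (hp : p < 0) (hu : ∀ a, 0 ≤ u a) (hv : ∀ a, 0 < v a)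
    (h : (∀ a, 0 < u a) → ∑ a, v a ^ p ≤ ∑ a, u a ^ p) :
    pMeanWelfare n p u ≤ pMeanWelfare n p v := by
  by_cases hzero : ∃ a, u a = 0
  · rw [pMeanWelfare, if_pos ⟨hp, hzero⟩]
    exact pMeanWelfare_nonneg fun a => (hv a).le
  have hpos : ∀ a, 0 < u a := fun a => (hu a).lt_of_ne' fun ha => hzero ⟨a, ha⟩
  rcases n.eq_zero_or_pos with rfl | hn
  · rw [Subsingleton.elim u v]
  have : Nonempty (Fin n) := ⟨⟨0, hn⟩⟩
  have hsum : 0 < ∑ a, v a ^ p := sum_pos (fun a _ => rpow_pos_of_pos (hv a) p) univ_nonempty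
  rw [pMeanWelfare_of_pos hpos, pMeanWelfare_of_pos hv]
  refine rpow_le_rpow_of_nonpos (by positivity) ?_ (one_div_nonpos.2 hp.le)
  exact mul_le_mul_of_nonneg_left (h hpos) (by positivity)

lemma mul_pMeanWelfare_le_of_sum_rpow_le (hp : p < 0) {c : ℝ} (hc : 0 < c) (hu : ∀ a, 0 ≤ u a)
    (hv : ∀ a, 0 < v a) (h : (∀ a, 0 < u a) → ∑ a, v a ^ p ≤ c ^ p * ∑ a, u a ^ p) :
    c * pMeanWelfare n p u ≤ pMeanWelfare n p v := by
  rw [← pMeanWelfare_const_mul hp.ne hc hu]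
  refine pMeanWelfare_le_of_sum_rpow_le hp (fun a => mul_nonneg hc.le (hu a)) hv fun hpos => ?_
  simp only [mul_rpow hc.le (hu _), ← mul_sum]
  exact h fun a => pos_of_mul_pos_right (hpos a) hc.le

lemma pMeanWelfare_one_le_one : pMeanWelfare n p (fun _ => 1) ≤ 1 := by
  rcases n.eq_zero_or_pos with rfl | hn
  · rw [pMeanWelfare_of_pos (by simp)]
    simp [zero_rpow_le_one]
  · have hn' : (n : ℝ) ≠ 0 := by positivity
    simp [pMeanWelfare, hn']

lemma pMeanWelfare_le_one (hp : p < 0) (hu : ∀ a, 0 ≤ u a) (hu1 : ∀ a, u a ≤ 1) :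
    pMeanWelfare n p u ≤ 1 := by
  refine (pMeanWelfare_le_of_sum_rpow_le hp hu (fun _ => one_pos) fun hpos => ?_).trans
    pMeanWelfare_one_le_one
  refine sum_le_sum fun a _ => ?_
  rw [one_rpow]
  exact one_le_rpow_of_pos_of_le_one_of_nonpos (hpos a) (hu1 a) hp.le

lemma pMeanWelfare_le_OPTwelfare {m : ℕ} {v y : Fin m → Fin n → ℝ} (hp : p < 0)
    (hv : ∀ k a, 0 ≤ v k a) (hv1 : ∀ a, ∑ k, v k a = 1)
    (hy : ∀ k a, 0 ≤ y k a) (hy1 : ∀ k, ∑ a, y k a ≤ 1) :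
    pMeanWelfare n p (fun a => ∑ k, v k a * y k a) ≤ OPTwelfare n m p v := by
  refine le_csSup ⟨1, ?_⟩ ⟨y, hy, hy1, rfl⟩
  rintro _ ⟨z, hz, hz1, rfl⟩
  have hz_le_one (k a) : z k a ≤ 1 :=
    (single_le_sum (fun b _ => hz k b) (mem_univ a)).trans (hz1 k)
  refine pMeanWelfare_le_one hp (fun a => sum_nonneg fun k _ => mul_nonneg (hv k a) (hz k a))
    fun a => ?_
  rw [← hv1 a]
  exact sum_le_sum fun k _ => mul_le_of_le_one_right (hv k a) (hz_le_one k a)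

end PMeanWelfare

section FeasibleOnline

variable {n m : ℕ} {A : (k : ℕ) → (Fin (k + 1) → Fin n → ℝ) → (Fin n → ℝ)}

/-- The rule `A` always hands out nonnegative shares of total at most `1`: it is a deterministic
online algorithm. -/
def FeasibleOnline (A : (k : ℕ) → (Fin (k + 1) → Fin n → ℝ) → (Fin n → ℝ)) : Prop :=
  ∀ k h, (∀ a, 0 ≤ A k h a) ∧ ∑ a, A k h a ≤ 1

lemma onlineUtilities_nonneg (hA : FeasibleOnline A) {v : Fin m → Fin n → ℝ}
    (hv : ∀ k a, 0 ≤ v k a) (a : Fin n) : 0 ≤ onlineUtilities n m A v a :=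
  sum_nonneg fun k _ => mul_nonneg (hv k a) ((hA _ _).1 a)

lemma ALGwelfare_nonneg (hA : FeasibleOnline A) {v : Fin m → Fin n → ℝ}
    (hv : ∀ k a, 0 ≤ v k a) (p : ℝ) : 0 ≤ ALGwelfare n m p A v :=
  pMeanWelfare_nonneg (onlineUtilities_nonneg hA hv)

end FeasibleOnline

/-- A sequence of finite sets that starts with the whole type and repeatedly passes to a subset of
half the size, rounded down. -/
structure IsHalving {ι : Type*} [Fintype ι] (S : ℕ → Finset ι) : Prop where
  zero : S 0 = univ
  succ_subset : ∀ k, S (k + 1) ⊆ S k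
  card_succ : ∀ k, #(S (k + 1)) = #(S k) / 2

namespace IsHalving

variable {ι : Type*} [Fintype ι] {S : ℕ → Finset ι}

lemma antitone (hS : IsHalving S) : Antitone S :=
  antitone_nat_of_succ_le hS.succ_subset

lemma mem_zero (hS : IsHalving S) (a : ι) : a ∈ S 0 :=
  hS.zero ▸ mem_univ a

lemma card_eq (hS : IsHalving S) (k : ℕ) : #(S k) = Fintype.card ι / 2 ^ k := by
  induction k with
  | zero => simp [hS.zero]
  | succ k ih => rw [hS.card_succ, ih, Nat.div_div_eq_div_mul, pow_succ]

lemma card_mul_two_pow_le (hS : IsHalving S) (k : ℕ) : #(S k) * 2 ^ k ≤ Fintype.card ι :=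
  hS.card_eq k ▸ Nat.div_mul_le_self _ _

lemma card_le_card_mul_two_pow (hS : IsHalving S) {k : ℕ} (hk : 2 ^ k ≤ Fintype.card ι) :
    Fintype.card ι ≤ #(S k) * 2 ^ (k + 1) := by
  have hpos : 1 ≤ Fintype.card ι / 2 ^ k := (Nat.one_le_div_iff (by positivity)).2 hk
  calc Fintype.card ι ≤ 2 ^ k * (Fintype.card ι / 2 ^ k + 1) :=
        (Nat.lt_mul_div_succ _ (by positivity)).le
    _ ≤ 2 ^ k * (Fintype.card ι / 2 ^ k + Fintype.card ι / 2 ^ k) := by gcongr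
    _ = #(S k) * 2 ^ (k + 1) := by rw [hS.card_eq]; ring

lemma card_mul_card_rpow_le (hS : IsHalving S) {p X : ℝ} {L : ℕ} (hp : p ≤ 0) (hX0 : 0 < X)
    (hX : X ^ (1 - p) = (Fintype.card ι : ℝ) ^ (-p)) (hXL : X ≤ 2 ^ L) :
    #(S L) * (#(S L) : ℝ) ^ (-p) ≤ Fintype.card ι := by
  have hcard : (#(S L) : ℝ) ≤ Fintype.card ι / X := by
    rw [le_div_iff₀ hX0]
    calc #(S L) * X ≤ #(S L) * 2 ^ L := by gcongr
      _ ≤ Fintype.card ι := by exact_mod_cast hS.card_mul_two_pow_le L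
  have mul_rpow_neg {x : ℝ} (hx : 0 ≤ x) : x * x ^ (-p) = x ^ (1 - p) := by
    rw [sub_eq_add_neg, rpow_one_add' hx (by linarith)]
  calc #(S L) * (#(S L) : ℝ) ^ (-p) = (#(S L) : ℝ) ^ (1 - p) := mul_rpow_neg (by positivity)
    _ ≤ (Fintype.card ι / X) ^ (1 - p) := by gcongr; linarith
    _ = Fintype.card ι * ((Fintype.card ι : ℝ) ^ (-p) / X ^ (1 - p)) := by
        rw [div_rpow (by positivity) hX0.le, ← mul_rpow_neg (by positivity), mul_div_assoc]
    _ = Fintype.card ι := by rw [← hX, div_self (by positivity), mul_one]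

end IsHalving

section ItemValues

lemma exists_mem_iff_le_of_antitone {ι : Type*} {S : ℕ → Finset ι} {a : ι} {L : ℕ}
    (hS : Antitone S) (h0 : a ∈ S 0) (hL : a ∉ S L) :
    ∃ i < L, ∀ k, a ∈ S k ↔ k ≤ i := by
  classical
  have hex : ∃ k, a ∉ S k := ⟨L, hL⟩
  obtain ⟨i, hi⟩ : ∃ i, Nat.find hex = i + 1 :=
    Nat.exists_eq_succ_of_ne_zero fun h => (h ▸ Nat.find_spec hex) h0
  have hiL : i + 1 ≤ L := hi ▸ Nat.find_min' hex hL
  refine ⟨i, hiL, fun k => ⟨fun hk => ?_, fun hk => ?_⟩⟩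
  · by_contra! hik
    exact Nat.find_spec hex (hS (hi ▸ hik) hk)
  · exact not_not.1 (Nat.find_min hex (hi ▸ Nat.lt_succ_of_le hk))

variable {ι : Type*} [DecidableEq ι]

/-- The values of the `k`-th common item, presented to the set `T` of agents. The items
`0, …, L - 1` are worth `1/2, 1/4, …, 2^{-L}` and item `L` is worth `2^{-L}` again, so that the
values of items `0, …, L` add up to `1`. -/
noncomputable def commonValue (L k : ℕ) (T : Finset ι) (a : ι) : ℝ :=
  if a ∈ T then (1 / 2) ^ min (k + 1) L else 0

/-- What agent `a` lacks for a monopolist utility of `1` when the common items `0, …, L` are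
presented to the sets `S 0, …, S L`; this is the value of its personal item. -/
noncomputable def personalValue (L : ℕ) (S : ℕ → Finset ι) (a : ι) : ℝ :=
  1 - ∑ k ∈ range (L + 1), commonValue L k (S k) a

variable {L : ℕ} {S : ℕ → Finset ι} {a : ι}

lemma commonValue_nonneg (L k : ℕ) (T : Finset ι) (a : ι) : 0 ≤ commonValue L k T a := by
  unfold commonValue
  split_ifs <;> positivity

lemma commonValue_le {k : ℕ} (hk : k ≤ L) (T : Finset ι) (a : ι) :
    commonValue L k T a ≤ (1 / 2) ^ k := by
  unfold commonValue
  split_ifs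
  · exact pow_le_pow_of_le_one (by norm_num) (by norm_num) (by omega)
  · positivity

lemma sum_range_half_pow_succ (j : ℕ) :
    ∑ k ∈ range j, (1 / 2 : ℝ) ^ (k + 1) = 1 - (1 / 2) ^ j := by
  simp_rw [pow_succ]
  rw [← sum_mul, geom_sum_eq (by norm_num)]
  ring

lemma personalValue_of_mem (hS : Antitone S) (ha : a ∈ S L) : personalValue L S a = 0 := by
  have hcommon : ∀ k ∈ range L, commonValue L k (S k) a = (1 / 2) ^ (k + 1) := fun k hk => by
    have hkL : k + 1 ≤ L := mem_range.1 hk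
    rw [commonValue, if_pos (hS (Nat.le_of_succ_le hkL) ha), min_eq_left hkL]
  have hlast : commonValue L L (S L) a = (1 / 2) ^ L := by simp [commonValue, ha]
  rw [personalValue, sum_range_succ, sum_congr rfl hcommon, sum_range_half_pow_succ, hlast]
  ring

lemma exists_personalValue_eq (hS : Antitone S) (h0 : a ∈ S 0) (hL : a ∉ S L) :
    ∃ i < L, a ∈ S i ∧ personalValue L S a = (1 / 2) ^ (i + 1) := by
  obtain ⟨i, hiL, hmem⟩ := exists_mem_iff_le_of_antitone hS h0 hL
  refine ⟨i, hiL, (hmem i).2 le_rfl, ?_⟩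
  have hcommon : ∀ k ∈ range (i + 1), commonValue L k (S k) a = (1 / 2) ^ (k + 1) :=
    fun k hk => by
      have hki : k ≤ i := Nat.lt_succ_iff.1 (mem_range.1 hk)
      rw [commonValue, if_pos ((hmem k).2 hki), min_eq_left (by omega)]
  have hlater : ∀ k ∈ range (L + 1), k ∉ range (i + 1) → commonValue L k (S k) a = 0 :=
    fun k _ hk => if_neg fun hak => hk (mem_range.2 (Nat.lt_succ_of_le ((hmem k).1 hak)))
  rw [personalValue, ← sum_subset (range_subset_range.2 (by omega)) hlater,
    sum_congr rfl hcommon, sum_range_half_pow_succ]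
  ring

lemma personalValue_pos (hS : Antitone S) (h0 : a ∈ S 0) (hL : a ∉ S L) :
    0 < personalValue L S a := by
  obtain ⟨i, -, -, hi⟩ := exists_personalValue_eq hS h0 hL
  rw [hi]
  positivity

lemma personalValue_nonneg (hS : Antitone S) (h0 : a ∈ S 0) : 0 ≤ personalValue L S a := by
  by_cases ha : a ∈ S L
  · exact (personalValue_of_mem hS ha).ge
  · exact (personalValue_pos hS h0 ha).le

lemma personalValue_rpow_le {p : ℝ} (hp : -1 ≤ p) (hS : Antitone S) (h0 : a ∈ S 0) (ha : a ∉ S L) :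
    personalValue L S a ^ p ≤ ∑ i ∈ range L, if a ∈ S i then (2 : ℝ) ^ (i + 1) else 0 := by
  obtain ⟨i, hiL, hai, hvalue⟩ := exists_personalValue_eq hS h0 ha
  calc personalValue L S a ^ p ≤ personalValue L S a ^ (-1 : ℝ) := by
        rw [hvalue]
        exact rpow_le_rpow_of_exponent_ge (by positivity)
          (pow_le_one₀ (by norm_num) (by norm_num)) hp
    _ = if a ∈ S i then (2 : ℝ) ^ (i + 1) else 0 := by
        rw [hvalue, rpow_neg_one, if_pos hai, one_div, inv_pow, inv_inv]
    _ ≤ _ := single_le_sum (f := fun i => if a ∈ S i then (2 : ℝ) ^ (i + 1) else 0)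
        (fun i _ => by positivity) (mem_range.2 hiL)

end ItemValues

section HardInstance

variable {n L : ℕ} {S : ℕ → Finset (Fin n)}

/-- The hard instance: item `k ≤ L` is the common item presented to `S k`, and item `L + 1 + b` is
the personal item of agent `b`. -/
noncomputable def hardInstance (L : ℕ) (S : ℕ → Finset (Fin n)) : Fin (L + 1 + n) → Fin n → ℝ :=
  Fin.append (fun k => commonValue L k (S k)) (fun b => Pi.single b (personalValue L S b))

lemma sum_hardInstance_mul (L : ℕ) (S : ℕ → Finset (Fin n)) (a : Fin n)
    (y : Fin (L + 1 + n) → ℝ) :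
    ∑ k, hardInstance L S k a * y k =
      ∑ k : Fin (L + 1), commonValue L k (S k) a * y (Fin.castAdd n k) +
        personalValue L S a * y (Fin.natAdd (L + 1) a) := by
  simp [hardInstance, Fin.sum_univ_add, Pi.single_apply]

lemma hardInstance_nonneg (hS : Antitone S) (h0 : ∀ a, a ∈ S 0) (k : Fin (L + 1 + n))
    (a : Fin n) : 0 ≤ hardInstance L S k a := by
  refine Fin.addCases (fun k => ?_) (fun b => ?_) k
  · simpa only [hardInstance, Fin.append_left] using commonValue_nonneg L k (S k) a
  · simp only [hardInstance, Fin.append_right]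
    exact (Pi.single_nonneg (α := fun _ => ℝ)).2
      (personalValue_nonneg hS (h0 b)) a

lemma sum_hardInstance (L : ℕ) (S : ℕ → Finset (Fin n)) (a : Fin n) :
    ∑ k, hardInstance L S k a = 1 := by
  have h := sum_hardInstance_mul L S a fun _ => 1
  simp only [mul_one] at h
  rw [h, Fin.sum_univ_eq_sum_range fun k => commonValue L k (S k) a, personalValue]
  ring

lemma exists_hardInstance_eq_zero_or_eq (hS : Antitone S) (h0 : ∀ a, a ∈ S 0)
    (k : Fin (L + 1 + n)) :
    ∃ w : ℝ, 0 ≤ w ∧ ∀ a, hardInstance L S k a = 0 ∨ hardInstance L S k a = w := by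
  refine Fin.addCases (fun k => ?_) (fun b => ?_) k
  · refine ⟨(1 / 2) ^ min (k.1 + 1) L, by positivity, fun a => ?_⟩
    simp only [hardInstance, Fin.append_left, commonValue]
    exact (ite_eq_or_eq _ _ _).symm
  · refine ⟨personalValue L S b, personalValue_nonneg hS (h0 b), fun a => ?_⟩
    simp only [hardInstance, Fin.append_right, Pi.single_apply]
    exact (ite_eq_or_eq _ _ _).symm

/-- The offline allocation of the hard instance: the common items are split evenly within `S L`,
and the personal items go to their owners. -/
noncomputable def offlineAllocation (L : ℕ) (S : ℕ → Finset (Fin n)) :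
    Fin (L + 1 + n) → Fin n → ℝ :=
  Fin.append (fun _ a => if a ∈ S L then (#(S L) : ℝ)⁻¹ else 0) (fun b => Pi.single b 1)

/-- The utilities of `offlineAllocation` on the hard instance; see
`sum_hardInstance_mul_offlineAllocation`. -/
noncomputable def offlineUtility (L : ℕ) (S : ℕ → Finset (Fin n)) (a : Fin n) : ℝ :=
  if a ∈ S L then (#(S L) : ℝ)⁻¹ else personalValue L S a

lemma offlineAllocation_nonneg (L : ℕ) (S : ℕ → Finset (Fin n)) (k : Fin (L + 1 + n))
    (a : Fin n) : 0 ≤ offlineAllocation L S k a := by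
  refine Fin.addCases (fun k => ?_) (fun b => ?_) k
  · simp only [offlineAllocation, Fin.append_left]
    split_ifs <;> positivity
  · simp only [offlineAllocation, Fin.append_right]
    exact (Pi.single_nonneg (α := fun _ => ℝ)).2 zero_le_one a

lemma sum_offlineAllocation_le_one (L : ℕ) (S : ℕ → Finset (Fin n)) (k : Fin (L + 1 + n)) :
    ∑ a, offlineAllocation L S k a ≤ 1 := by
  refine Fin.addCases (fun k => ?_) (fun b => ?_) k
  · simpa [offlineAllocation] using mul_inv_le_one
  · simp [offlineAllocation]

lemma sum_hardInstance_mul_offlineAllocation (hS : Antitone S) (a : Fin n) :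
    ∑ k, hardInstance L S k a * offlineAllocation L S k a = offlineUtility L S a := by
  rw [sum_hardInstance_mul]
  simp only [offlineAllocation, Fin.append_left, Fin.append_right, Pi.single_eq_same, mul_one,
    offlineUtility, ← sum_mul]
  split_ifs with ha
  · have hcommon : ∑ k : Fin (L + 1), commonValue L k (S k) a = 1 := by
      have := personalValue_of_mem hS ha
      rw [personalValue, sub_eq_zero] at this
      rw [Fin.sum_univ_eq_sum_range fun k => commonValue L k (S k) a, ← this]
    rw [hcommon, personalValue_of_mem hS ha, one_mul, add_zero]
  · rw [mul_zero, zero_add]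

lemma offlineUtility_pos (hS : Antitone S) (h0 : ∀ a, a ∈ S 0) (a : Fin n) :
    0 < offlineUtility L S a := by
  unfold offlineUtility
  split_ifs with ha
  · have : 0 < #(S L) := card_pos.2 ⟨a, ha⟩
    positivity
  · exact personalValue_pos hS (h0 a) ha

lemma sum_compl_personalValue_rpow_le {p : ℝ} (hp : -1 ≤ p) (hS : IsHalving S) :
    ∑ a ∈ (S L)ᶜ, personalValue L S a ^ p ≤ 2 * n * L := by
  have hround (i : ℕ) : ∑ a, (if a ∈ S i then (2 : ℝ) ^ (i + 1) else 0) ≤ 2 * n := by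
    have hcard : (#(S i) * 2 ^ i : ℝ) ≤ n := by
      exact_mod_cast (Fintype.card_fin n) ▸ hS.card_mul_two_pow_le i
    calc ∑ a, (if a ∈ S i then (2 : ℝ) ^ (i + 1) else 0) = 2 * (#(S i) * 2 ^ i) := by
          simp [pow_succ]; ring
      _ ≤ 2 * n := by gcongr
  calc ∑ a ∈ (S L)ᶜ, personalValue L S a ^ p
      ≤ ∑ a ∈ (S L)ᶜ, ∑ i ∈ range L, (if a ∈ S i then (2 : ℝ) ^ (i + 1) else 0) :=
        sum_le_sum fun a ha => personalValue_rpow_le hp hS.antitone (hS.mem_zero a) (mem_compl.1 ha)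
    _ ≤ ∑ a, ∑ i ∈ range L, (if a ∈ S i then (2 : ℝ) ^ (i + 1) else 0) :=
        sum_le_sum_of_subset_of_nonneg (subset_univ _) fun a _ _ => by positivity
    _ = ∑ i ∈ range L, ∑ a, (if a ∈ S i then (2 : ℝ) ^ (i + 1) else 0) := sum_comm
    _ ≤ ∑ i ∈ range L, 2 * (n : ℝ) := sum_le_sum fun i _ => hround i
    _ = 2 * n * L := by rw [sum_const, card_range, nsmul_eq_mul, mul_comm]

lemma sum_offlineUtility_rpow_le {p : ℝ} (hp : -1 ≤ p) (hS : IsHalving S) :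
    ∑ a, offlineUtility L S a ^ p ≤ #(S L) * (#(S L) : ℝ) ^ (-p) + 2 * n * L := by
  rw [← sum_add_sum_compl (S L)]
  gcongr
  · refine (sum_congr rfl fun a ha => ?_).trans_le (by rw [sum_const, nsmul_eq_mul])
    rw [offlineUtility, if_pos ha, rpow_neg_eq_inv_rpow]
  · refine (sum_congr rfl fun a ha => ?_).trans_le (sum_compl_personalValue_rpow_le hp hS)
    rw [offlineUtility, if_neg (mem_compl.1 ha)]

end HardInstance

section Adversary

variable {n L : ℕ} {A : (k : ℕ) → (Fin (k + 1) → Fin n → ℝ) → (Fin n → ℝ)}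

/-- The sets of agents to which the adversary presents the common items: `survivors A L (k + 1)` is
the half of `survivors A L k` that receives least of item `k` from the algorithm `A`. -/
noncomputable def survivors (A : (k : ℕ) → (Fin (k + 1) → Fin n → ℝ) → (Fin n → ℝ)) (L : ℕ) :
    ℕ → Finset (Fin n)
  | 0 => univ
  | k + 1 => lowerHalf (A k fun i => commonValue L i.1 (survivors A L i.1)) (survivors A L k)
  termination_by k => k

lemma isHalving_survivors (A : (k : ℕ) → (Fin (k + 1) → Fin n → ℝ) → (Fin n → ℝ)) (L : ℕ) :
    IsHalving (survivors A L) where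
  zero := by rw [survivors]
  succ_subset k := by rw [survivors]; exact lowerHalf_subset
  card_succ k := by rw [survivors, card_lowerHalf]

lemma share_mul_card_survivors_le (hA : FeasibleOnline A) {k : ℕ} {b : Fin n}
    (hb : b ∈ survivors A L (k + 1)) :
    A k (fun i => commonValue L i (survivors A L i)) b * #(survivors A L k) ≤ 2 := by
  obtain ⟨hnonneg, hsum⟩ := hA k fun i => commonValue L i (survivors A L i)
  rw [survivors] at hb
  calc _ ≤ 2 * ∑ a ∈ survivors A L k, A k (fun i => commonValue L i (survivors A L i)) a :=
        mul_card_le_two_mul_sum_of_mem_lowerHalf (fun a _ => hnonneg a) hb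
    _ ≤ 2 * 1 := by
        gcongr
        exact (sum_le_univ_sum_of_nonneg hnonneg).trans hsum
    _ = 2 := mul_one 2

lemma commonValue_mul_share_le (hA : FeasibleOnline A) (hL : 2 ^ L ≤ n) {k : ℕ} (hk : k ≤ L)
    {b : Fin n} (hb : b ∈ survivors A L (k + 1)) :
    commonValue L k (survivors A L k) b * A k (fun i => commonValue L i (survivors A L i)) b ≤
      4 / n := by
  have hshare := share_mul_card_survivors_le hA hb
  have hshare0 := (hA k fun i => commonValue L i (survivors A L i)).1 b
  have hcard : (n : ℝ) ≤ #(survivors A L k) * 2 ^ (k + 1) := by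
    have hk' : 2 ^ k ≤ Fintype.card (Fin n) := by
      simpa using (Nat.pow_le_pow_right two_pos hk).trans hL
    simpa using (Nat.cast_le (α := ℝ)).2
      ((isHalving_survivors A L).card_le_card_mul_two_pow hk')
  have hn : (0 : ℝ) < n := by exact_mod_cast (Nat.two_pow_pos L).trans_le hL
  set x := A k fun i => commonValue L i (survivors A L i)
  rw [le_div_iff₀ hn]
  calc commonValue L k (survivors A L k) b * x b * n
      ≤ (1 / 2) ^ k * x b * (#(survivors A L k) * 2 ^ (k + 1)) := by
        gcongr
        exact commonValue_le hk _ b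
    _ = 2 * (x b * #(survivors A L k)) := by rw [one_div, inv_pow, pow_succ]; field_simp
    _ ≤ 4 := by linarith

lemma onlineUtilities_le_of_mem_survivors (hA : FeasibleOnline A) (hL : 2 ^ L ≤ n) {b : Fin n}
    (hb : b ∈ survivors A L (L + 1)) :
    onlineUtilities n (L + 1 + n) A (hardInstance L (survivors A L)) b ≤ 4 * (L + 1) / n := by
  have hanti := (isHalving_survivors A L).antitone
  have history (k : Fin (L + 1)) :
      (fun i : Fin (k + 1) => hardInstance L (survivors A L)
        (Fin.castLE (Fin.castAdd n k).isLt i)) =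
      fun i => commonValue L i.1 (survivors A L i.1) := by
    funext i
    exact Fin.append_left _ _ (Fin.castLE k.isLt i)
  rw [onlineUtilities, sum_hardInstance_mul,
    personalValue_of_mem hanti (hanti (Nat.le_succ L) hb), zero_mul, add_zero]
  calc _ ≤ ∑ k : Fin (L + 1), 4 / (n : ℝ) := by
        refine sum_le_sum fun k _ => ?_
        have hbk : b ∈ survivors A L (k + 1) := hanti (Nat.succ_le_of_lt k.isLt) hb
        have hitem := commonValue_mul_share_le hA hL (Nat.lt_succ_iff.1 k.isLt) hbk
        rw [← history k] at hitem
        exact hitem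
    _ = 4 * (L + 1) / n := by
        rw [sum_const, card_univ, Fintype.card_fin, nsmul_eq_mul]
        push_cast
        ring

lemma le_sum_onlineUtilities_rpow (hA : FeasibleOnline A) {p : ℝ} (hp : -1 ≤ p) (hp0 : p ≤ 0)
    (hL : 2 ^ (L + 1) ≤ n)
    (hpos : ∀ a, 0 < onlineUtilities n (L + 1 + n) A (hardInstance L (survivors A L)) a) :
    (n : ℝ) / 2 ^ (L + 2) * ((n : ℝ) ^ (-p) / (4 * (L + 1))) ≤
      ∑ a, onlineUtilities n (L + 1 + n) A (hardInstance L (survivors A L)) a ^ p := by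
  set u := onlineUtilities n (L + 1 + n) A (hardInstance L (survivors A L))
  have hL' : 2 ^ L ≤ n := (Nat.pow_le_pow_right two_pos L.le_succ).trans hL
  have hcard : (n : ℝ) / 2 ^ (L + 2) ≤ #(survivors A L (L + 1)) := by
    rw [div_le_iff₀ (by positivity)]
    simpa using (Nat.cast_le (α := ℝ)).2
      ((isHalving_survivors A L).card_le_card_mul_two_pow (by simpa using hL))
  have hloss : (n : ℝ) ^ (-p) / (4 * (L + 1)) ≤ (4 * (L + 1) / n) ^ p := by
    have hinv : (4 * ((L : ℝ) + 1))⁻¹ ≤ (4 * (L + 1)) ^ p := by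
      rw [← rpow_neg_one]
      exact rpow_le_rpow_of_exponent_le (by linarith [L.cast_nonneg (α := ℝ)]) hp
    rw [div_rpow (by positivity) (by positivity), rpow_neg (by positivity), div_eq_inv_mul,
      div_eq_mul_inv]
    gcongr
  calc (n : ℝ) / 2 ^ (L + 2) * ((n : ℝ) ^ (-p) / (4 * (L + 1)))
      ≤ #(survivors A L (L + 1)) * (4 * (L + 1) / n) ^ p := by gcongr
    _ = #(survivors A L (L + 1)) • (4 * ((L : ℝ) + 1) / n) ^ p := (nsmul_eq_mul _ _).symm
    _ ≤ ∑ b ∈ survivors A L (L + 1), u b ^ p := card_nsmul_le_sum _ _ _ fun b hb =>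
        rpow_le_rpow_of_nonpos (hpos b) (onlineUtilities_le_of_mem_survivors hA hL' hb) hp0
    _ ≤ ∑ a, u a ^ p :=
        sum_le_univ_sum_of_nonneg fun a => (rpow_pos_of_pos (hpos a) p).le

end Adversary

section Parameters

variable {n L : ℕ} {p X : ℝ}

lemma exists_two_pow_near_rpow {s : ℝ} (hn : 16 ≤ n) (hs0 : 0 ≤ s) (hs : s ≤ 1 / 2) :
    ∃ L : ℕ, 2 ^ (L + 1) ≤ n ∧ (n : ℝ) ^ s ≤ 2 ^ L ∧ (2 : ℝ) ^ L ≤ 2 * (n : ℝ) ^ s := by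
  have hn16 : (16 : ℝ) ≤ n := by exact_mod_cast hn
  have hn1 : (1 : ℝ) ≤ n := by linarith
  obtain ⟨l, hl_le, hl_lt⟩ := exists_nat_pow_near (one_le_rpow hn1 hs0) one_lt_two
  have hsqrt : (n : ℝ) ^ s ≤ √n := by
    rw [sqrt_eq_rpow]
    exact rpow_le_rpow_of_exponent_le hn1 hs
  have hfour : 4 ≤ √(n : ℝ) := le_sqrt_of_sq_le (by linarith)
  refine ⟨l + 1, ?_, hl_lt.le, by rw [pow_succ]; linarith⟩
  have : (2 : ℝ) ^ (l + 1 + 1) ≤ n := by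
    calc (2 : ℝ) ^ (l + 1 + 1) = 4 * 2 ^ l := by ring
      _ ≤ √n * √n := by gcongr; exact hl_le.trans hsqrt
      _ = n := mul_self_sqrt n.cast_nonneg
  exact_mod_cast this

lemma sum_offlineUtility_rpow_le_mul_sum_onlineUtilities_rpow
    {A : (k : ℕ) → (Fin (k + 1) → Fin n → ℝ) → (Fin n → ℝ)} (hA : FeasibleOnline A)
    (hp : -1 ≤ p) (hp0 : p ≤ 0) (hX0 : 0 < X) (hX : X ^ (1 - p) = (n : ℝ) ^ (-p))
    (hXL : X ≤ 2 ^ L) (hLX : 2 ^ L ≤ 2 * X) (hL : 2 ^ (L + 1) ≤ n)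
    (hpos : ∀ a, 0 < onlineUtilities n (L + 1 + n) A (hardInstance L (survivors A L)) a) :
    ∑ a, offlineUtility L (survivors A L) a ^ p ≤ X ^ p * (64 * (L + 1) ^ 2) *
      ∑ a, onlineUtilities n (L + 1 + n) A (hardInstance L (survivors A L)) a ^ p := by
  have hS := isHalving_survivors A L
  have hnX : (n : ℝ) ^ (-p) = X / X ^ p := by rw [← hX, rpow_sub hX0, rpow_one]
  calc ∑ a, offlineUtility L (survivors A L) a ^ p
      ≤ n + 2 * n * L := (sum_offlineUtility_rpow_le hp hS).trans
        (by gcongr; simpa using hS.card_mul_card_rpow_le hp0 hX0 (by simpa using hX) hXL)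
    _ ≤ 2 * n * (L + 1) := by linarith [n.cast_nonneg (α := ℝ)]
    _ = X ^ p * (64 * (L + 1) ^ 2) * (n / (8 * X) * ((n : ℝ) ^ (-p) / (4 * (L + 1)))) := by
        rw [hnX]
        field_simp
        ring
    _ ≤ X ^ p * (64 * (L + 1) ^ 2) *
          (n / 2 ^ (L + 2) * ((n : ℝ) ^ (-p) / (4 * (L + 1)))) := by
        gcongr
        linarith [pow_add (2 : ℝ) L 2]
    _ ≤ _ := by
        gcongr
        exact le_sum_onlineUtilities_rpow hA hp hp0 hL hpos

end Parameters

theorem exists_instance_mul_ALGwelfare_le_OPTwelfare {n : ℕ} (hn : 16 ≤ n) {p : ℝ} (hp : -1 ≤ p)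
    (hp0 : p < 0) {A : (k : ℕ) → (Fin (k + 1) → Fin n → ℝ) → (Fin n → ℝ)}
    (hA : FeasibleOnline A) :
    ∃ m : ℕ, ∃ v : Fin m → Fin n → ℝ,
      (∀ k a, 0 ≤ v k a) ∧ (∀ a, ∑ k, v k a = 1) ∧
      (∀ k, ∃ w : ℝ, 0 ≤ w ∧ ∀ a, v k a = 0 ∨ v k a = w) ∧
      (n : ℝ) ^ (|p| / (|p| + 1)) * (64 * (Nat.log 2 n : ℝ) ^ 2) ^ (1 / p) * ALGwelfare n m p A v ≤
        OPTwelfare n m p v := by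
  have hq1 : 0 < |p| + 1 := by positivity
  have hexp : |p| / (|p| + 1) ≤ 1 / 2 := by
    rw [abs_of_neg hp0, div_le_div_iff₀ (by linarith) two_pos]
    linarith
  obtain ⟨L, hL, hXL, hLX⟩ := exists_two_pow_near_rpow hn (by positivity) hexp
  set X : ℝ := (n : ℝ) ^ (|p| / (|p| + 1)) with hXdef
  have hX0 : 0 < X := by positivity
  have hX : X ^ (1 - p) = (n : ℝ) ^ (-p) := by
    rw [hXdef, ← rpow_mul n.cast_nonneg, ← abs_of_neg hp0, sub_eq_add_neg, ← abs_of_neg hp0,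
      add_comm 1, div_mul_cancel₀ _ hq1.ne']
  have hlog : (L : ℝ) + 1 ≤ Nat.log 2 n := by
    exact_mod_cast Nat.le_log_of_pow_le one_lt_two hL
  have hK : (0 : ℝ) < 64 * (Nat.log 2 n : ℝ) ^ 2 := by
    have : (0 : ℝ) < Nat.log 2 n := by linarith [L.cast_nonneg (α := ℝ)]
    positivity
  have hS := (isHalving_survivors A L).antitone
  have h0 := (isHalving_survivors A L).mem_zero
  have hv := hardInstance_nonneg (L := L) hS h0
  refine ⟨L + 1 + n, hardInstance L (survivors A L), hv, sum_hardInstance L _,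
    exists_hardInstance_eq_zero_or_eq hS h0, ?_⟩
  calc _ ≤ pMeanWelfare n p (offlineUtility L (survivors A L)) := by
        refine mul_pMeanWelfare_le_of_sum_rpow_le hp0 (by positivity)
          (onlineUtilities_nonneg hA hv) (offlineUtility_pos hS h0) fun hpos => ?_
        rw [mul_rpow hX0.le (by positivity), ← rpow_mul hK.le, one_div_mul_cancel hp0.ne, rpow_one]
        refine (sum_offlineUtility_rpow_le_mul_sum_onlineUtilities_rpow hA hp hp0.le hX0 hX hXL
          hLX hL hpos).trans ?_
        gcongr
        exact sum_nonneg fun a _ => (rpow_pos_of_pos (hpos a) p).le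
    _ ≤ OPTwelfare n (L + 1 + n) p (hardInstance L (survivors A L)) := by
        simpa only [sum_hardInstance_mul_offlineAllocation hS] using
          pMeanWelfare_le_OPTwelfare hp0 hv (sum_hardInstance L _)
            (offlineAllocation_nonneg L (survivors A L)) (sum_offlineAllocation_le_one L _)

lemma eventually_mul_natLog_pow_le_rpow {C : ℝ} (hC : 0 ≤ C) (b k : ℕ) {η : ℝ} (hη : 0 < η) :
    ∀ᶠ n : ℕ in Filter.atTop, C * (Nat.log b n : ℝ) ^ k ≤ (n : ℝ) ^ η := by
  have hlog : (fun x : ℝ => C * logb b x ^ k) =o[Filter.atTop] fun x => x ^ η := by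
    simpa only [rpow_natCast, logb, div_eq_inv_mul, mul_pow] using
      ((isLittleO_log_rpow_rpow_atTop (k : ℝ) hη).const_mul_left ((log b)⁻¹ ^ k)).const_mul_left C
  filter_upwards [tendsto_natCast_atTop_atTop.eventually (hlog.bound one_pos)] with n hn
  calc C * (Nat.log b n : ℝ) ^ k ≤ C * logb b n ^ k := by gcongr; exact natLog_le_logb n b
    _ ≤ (n : ℝ) ^ η := by
        rw [one_mul, norm_of_nonneg (r := (n : ℝ) ^ η) (by positivity)] at hn
        exact (le_abs_self _).trans hn

lemma rpow_neg_le_rpow_one_div {x K ε δ p : ℝ} (hx : 1 ≤ x) (hK : 0 < K) (hε : 0 ≤ ε)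
    (hp : p < 0) (hpδ : p ≤ -δ) (hKx : K ≤ x ^ (δ * ε)) : x ^ (-ε) ≤ K ^ (1 / p) := by
  have hexp : -ε ≤ δ * ε * (1 / p) := by
    rw [mul_one_div, le_div_iff_of_neg hp]
    nlinarith
  calc x ^ (-ε) ≤ x ^ (δ * ε * (1 / p)) := rpow_le_rpow_of_exponent_le hx hexp
    _ = (x ^ (δ * ε)) ^ (1 / p) := rpow_mul (by linarith) _ _
    _ ≤ K ^ (1 / p) := rpow_le_rpow_of_nonpos hK hKx (one_div_nonpos.2 hp.le)

theorem stmt_17 :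
    ∀ ε : ℝ, 0 < ε → ∀ δ : ℝ, 0 < δ → δ ≤ 1 →
    ∃ n₀ : ℕ, ∀ n : ℕ, n₀ ≤ n →
    ∀ p : ℝ, -1 ≤ p → p ≤ -δ →
    ∀ A : (k : ℕ) → (Fin (k + 1) → Fin n → ℝ) → (Fin n → ℝ),
      (∀ k h, (∀ a, 0 ≤ A k h a) ∧ ∑ a, A k h a ≤ 1) →
      ∃ m : ℕ, ∃ v : Fin m → Fin n → ℝ,
        (∀ k a, 0 ≤ v k a) ∧ (∀ a, ∑ k, v k a = 1) ∧
        (∀ k, ∃ w : ℝ, 0 ≤ w ∧ ∀ a, v k a = 0 ∨ v k a = w) ∧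
        OPTwelfare n m p v ≥
          (n : ℝ) ^ (|p| / (|p| + 1) - ε) * ALGwelfare n m p A v := by
  intro ε hε δ hδ _
  obtain ⟨N, hN⟩ := Filter.eventually_atTop.1
    (eventually_mul_natLog_pow_le_rpow (by norm_num : (0 : ℝ) ≤ 64) 2 2 (mul_pos hδ hε))
  refine ⟨max N 16, fun n hn p hp hpδ A hA => ?_⟩
  obtain ⟨hNn, hn16⟩ := max_le_iff.1 hn
  have hp0 : p < 0 := by linarith
  obtain ⟨m, v, hv, hv1, hdich, hwelfare⟩ :=
    exists_instance_mul_ALGwelfare_le_OPTwelfare hn16 hp hp0 hA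
  refine ⟨m, v, hv, hv1, hdich, le_trans ?_ hwelfare⟩
  have hlog : 0 < Nat.log 2 n := Nat.log_pos one_lt_two (by omega)
  have hloss := rpow_neg_le_rpow_one_div (by exact_mod_cast (by omega : 1 ≤ n))
    (by positivity) hε.le hp0 hpδ (hN n hNn)
  rw [sub_eq_add_neg, rpow_add (by exact_mod_cast (by omega : 0 < n))]
  have hALG := ALGwelfare_nonneg hA hv p
  gcongr
end

section
/- (Regularized Greedy in the positive Nashian regime.) In the continuous-time model with unit monopolist utilities, let n ≥ 2 and 0 < p ≤ 1/log n, and let γ(u) = u · (1 + log(1 + 1/n) − log u). Suppose the feasible allocation x satisfies the Regularized Greedy condition: for a.e. s ∈ [0,T], ∑_a x a s = 1 and, for all agents a and b, x a s > 0 implies v a s · γ(U b s)^{1−p} ≥ v b s · γ(U a s)^{1−p}. Then for every feasible allocation x* with U*_a = ∫_0^T v a s · x*_a s ds: ((1/n) ∑_a (U a T)^p)^{1/p} ≥ ((1/n) ∑_a (U*_a)^p)^{1/p} / (log(n+1) + 1). -/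
open MeasureTheory Real

/-!
Write `α = log (n + 1) + 1`. If `p > 1` then `n = 2`, and the claim holds agent by agent since
`U a T ≥ 1 / 2`, `Ustar a ≤ 1` and `2 ≤ α`.

For `p ≤ 1` the tangent of the concave function `y ↦ y ^ p` at `γ (U a T)` gives
`(Ustar a) ^ p ≤ (1 - p) * γ (U a T) ^ p + p * γ (U a T) ^ (p - 1) * Ustar a`.
As `γ` is increasing on the range of the utilities, the weight `γ (U a T) ^ (p - 1)` is at most
`γ (U a s) ^ (p - 1)` at every earlier time `s`. With these weights the greedy allocation maximizes
welfare at almost every time, so `Ustar` may be replaced by the greedy allocation's own gains: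
`∑ a, γ (U a T) ^ (p - 1) * Ustar a ≤ ∑ a, ∫ v a * x a * γ (U a) ^ (p - 1)`.
Finally `p * γ u ^ (p - 1)` is at most the derivative of the potential
`ψ u = α ^ p * u ^ p - (1 - p) * γ u ^ p`, which is nonnegative at `u = 1 / n`, so `p` times the
`a`-th integral is at most `ψ (U a T)`. The terms `(1 - p) * γ (U a T) ^ p` cancel in the sum.
-/

section PMean

variable {ι : Type*} [Fintype ι] {p : ℝ}

/-- The `p`-mean of a finite family of nonnegative reals, meant for `p ≠ 0`. -/
noncomputable def pMean (p : ℝ) (u : ι → ℝ) : ℝ :=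
  (1 / (Fintype.card ι : ℝ) * ∑ a, u a ^ p) ^ (1 / p)

lemma pMean_const_mul {c : ℝ} (hc : 0 ≤ c) (hp : p ≠ 0) {u : ι → ℝ} (hu : ∀ a, 0 ≤ u a) :
    pMean p (fun a => c * u a) = c * pMean p u := by
  have hsum : 0 ≤ ∑ a, u a ^ p := Finset.sum_nonneg fun a _ => rpow_nonneg (hu a) p
  simp only [pMean, fun a => mul_rpow (z := p) hc (hu a)]
  rw [← Finset.mul_sum, mul_left_comm, mul_rpow (by positivity) (by positivity), one_div p,
    rpow_rpow_inv hc hp]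

lemma pMean_le_pMean_iff [Nonempty ι] (hp : 0 < p) {u w : ι → ℝ} (hu : ∀ a, 0 ≤ u a)
    (hw : ∀ a, 0 ≤ w a) : pMean p u ≤ pMean p w ↔ ∑ a, u a ^ p ≤ ∑ a, w a ^ p := by
  have hcard : 0 < 1 / (Fintype.card ι : ℝ) := by
    have := Fintype.card_pos (α := ι)
    positivity
  have hsum_nonneg {y : ι → ℝ} (hy : ∀ a, 0 ≤ y a) : 0 ≤ ∑ a, y a ^ p :=
    Finset.sum_nonneg fun a _ => rpow_nonneg (hy a) p
  rw [pMean, pMean, rpow_le_rpow_iff (mul_nonneg hcard.le (hsum_nonneg hu))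
    (mul_nonneg hcard.le (hsum_nonneg hw)) (by positivity), mul_le_mul_iff_right₀ hcard]

end PMean

lemma rpow_le_tangent {p y c : ℝ} (hp0 : 0 ≤ p) (hp1 : p ≤ 1) (hy : 0 ≤ y) (hc : 0 < c) :
    y ^ p ≤ (1 - p) * c ^ p + p * (c ^ (p - 1) * y) := by
  calc y ^ p = (c ^ p) ^ (1 - p) * (c ^ (p - 1) * y) ^ p := by
        rw [mul_rpow (by positivity) hy, ← rpow_mul hc.le, ← rpow_mul hc.le, ← mul_assoc,
          ← rpow_add hc]
        rw [show p * (1 - p) + (p - 1) * p = 0 by ring, rpow_zero, one_mul]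
    _ ≤ (1 - p) * c ^ p + p * (c ^ (p - 1) * y) :=
        geom_mean_le_arith_mean2_weighted (by linarith) hp0 (by positivity) (by positivity)
          (by ring)

lemma rpow_sub_one_mul_le {p L : ℝ} (hp : 0 ≤ p) (hL : 1 ≤ L) :
    L ^ (p - 1) * (1 + (1 - p) * (L - 1)) ≤ L ^ p := by
  have hL0 : 0 < L := one_pos.trans_le hL
  calc L ^ (p - 1) * (1 + (1 - p) * (L - 1)) ≤ L ^ (p - 1) * L := by
        gcongr
        nlinarith [mul_nonneg hp (sub_nonneg.2 hL)]
    _ = L ^ p := by rw [rpow_sub_one hL0.ne', div_mul_cancel₀ _ hL0.ne']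

lemma sum_mul_le_sum_mul_of_argmax {ι R : Type*} [Fintype ι] [CommSemiring R] [LinearOrder R]
    [IsStrictOrderedRing R] {x z w : ι → R} (hx : ∀ a, 0 ≤ x a) (hx1 : ∑ a, x a = 1)
    (hw : ∀ a, 0 ≤ w a) (hmax : ∀ a b, 0 < x a → w b ≤ w a) (hz : ∀ a, 0 ≤ z a)
    (hz1 : ∑ a, z a ≤ 1) : ∑ a, w a * z a ≤ ∑ a, w a * x a := by
  obtain ⟨m, -, hm⟩ : ∃ m ∈ Finset.univ, 0 < x m :=
    Finset.exists_lt_of_sum_lt (by simp [hx1])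
  calc ∑ a, w a * z a ≤ ∑ a, w m * z a :=
        Finset.sum_le_sum fun a _ => mul_le_mul_of_nonneg_right (hmax m a hm) (hz a)
    _ = w m * ∑ a, z a := by rw [Finset.mul_sum]
    _ ≤ w m * ∑ a, x a := mul_le_mul_of_nonneg_left (hz1.trans hx1.ge) (hw m)
    _ = ∑ a, w m * x a := by rw [Finset.mul_sum]
    _ ≤ ∑ a, w a * x a := by
        refine Finset.sum_le_sum fun a _ => ?_
        rcases (hx a).eq_or_lt with hzero | hpos
        · simp [← hzero]
        · exact mul_le_mul_of_nonneg_right (hmax a m hpos) (hx a)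

lemma integral_le_sub_of_monotoneOn {a b : ℝ} (hab : a ≤ b) {F F' f : ℝ → ℝ}
    (hF : MonotoneOn F (Set.Icc a b)) (hf : IntervalIntegrable f volume a b)
    (hF' : ∀ᵐ s ∂volume.restrict (Set.Icc a b), HasDerivAt F (F' s) s)
    (hle : ∀ᵐ s ∂volume.restrict (Set.Icc a b), f s ≤ F' s) :
    ∫ s in a..b, f s ≤ F b - F a := by
  have hF_ab : F a ≤ F b := hF (Set.left_mem_Icc.2 hab) (Set.right_mem_Icc.2 hab) hab
  rw [← Set.uIcc_of_le hab] at hF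
  have hderiv : ∫ s in a..b, deriv F s ≤ F b - F a := by
    have hmem := hF.intervalIntegral_deriv_mem_uIcc
    rw [Set.uIcc_of_le (sub_nonneg.2 hF_ab)] at hmem
    exact hmem.2
  refine le_trans ?_ hderiv
  refine intervalIntegral.integral_mono_ae_restrict hab hf hF.intervalIntegrable_deriv ?_
  filter_upwards [hF', hle] with s hs hfs using hs.deriv ▸ hfs

section Regularizer

variable {N p u : ℝ}

/-- The factor `α` lost by Regularized Greedy with base utility `1 / N`. -/
noncomputable def competitiveRatio (N : ℝ) : ℝ := log (N + 1) + 1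

/-- The factor `γ u / u` of the regularizer `γ`. It decreases from `competitiveRatio N` to `1` as
`u` runs from `1 / N` to `1 + 1 / N`. -/
noncomputable def logFactor (N u : ℝ) : ℝ := 1 + log (1 + 1 / N) - log u

/-- The function `γ` that Regularized Greedy with base utility `1 / N` applies to the utilities. -/
noncomputable def regularizer (N u : ℝ) : ℝ := u * logFactor N u

/-- The potential `ψ` whose growth along the utility of an agent pays for the weighted gains of that
agent. -/
noncomputable def potential (N p u : ℝ) : ℝ :=
  competitiveRatio N ^ p * u ^ p - (1 - p) * regularizer N u ^ p

lemma one_le_competitiveRatio (hN : 0 ≤ N) : 1 ≤ competitiveRatio N := by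
  have := log_nonneg (show 1 ≤ N + 1 by linarith)
  rw [competitiveRatio]
  linarith

lemma natCast_le_competitiveRatio_of_le_two {n : ℕ} (hn : n ≤ 2) :
    (n : ℝ) ≤ competitiveRatio n := by
  interval_cases n
  · exact_mod_cast zero_le_one.trans (one_le_competitiveRatio le_rfl)
  · exact_mod_cast one_le_competitiveRatio zero_le_one
  · have hlog : 1 ≤ log 3 := (le_log_iff_exp_le (by norm_num)).2 exp_one_lt_three.le
    norm_num [competitiveRatio]
    linarith

lemma one_div_log_natCast_le_one {n : ℕ} (hn : 2 < n) : 1 / log n ≤ 1 := by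
  have hn_exp : exp 1 ≤ n := exp_one_lt_three.le.trans (by exact_mod_cast hn)
  have hlog : 1 ≤ log n := (le_log_iff_exp_le ((exp_pos 1).trans_le hn_exp)).2 hn_exp
  exact div_le_one_of_le₀ hlog (zero_le_one.trans hlog)

lemma pos_of_one_div_le (hN : 0 < N) (hu : 1 / N ≤ u) : 0 < u := (one_div_pos.2 hN).trans_le hu

lemma logFactor_one_div (hN : 0 < N) : logFactor N (1 / N) = competitiveRatio N := by
  have hlog : log (1 + 1 / N) = log (N + 1) + log (1 / N) := by
    rw [← log_mul (by positivity) (by positivity)]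
    congr 1
    field_simp
  rw [logFactor, competitiveRatio, hlog]
  ring

lemma logFactor_mem_Icc (hN : 0 < N) (hu : u ∈ Set.Icc (1 / N) (1 + 1 / N)) :
    logFactor N u ∈ Set.Icc 1 (competitiveRatio N) := by
  have hlower := log_le_log (one_div_pos.2 hN) hu.1
  have hupper := log_le_log (pos_of_one_div_le hN hu.1) hu.2
  rw [← logFactor_one_div hN, logFactor, logFactor]
  constructor <;> linarith

lemma regularizer_pos (hN : 0 < N) (hu : u ∈ Set.Icc (1 / N) (1 + 1 / N)) :
    0 < regularizer N u :=
  mul_pos (pos_of_one_div_le hN hu.1) (one_pos.trans_le (logFactor_mem_Icc hN hu).1)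

lemma hasDerivAt_regularizer (hu : u ≠ 0) :
    HasDerivAt (regularizer N) (logFactor N u - 1) u := by
  have h := (hasDerivAt_id u).mul ((hasDerivAt_log hu).const_sub (1 + log (1 + 1 / N)))
  convert! h using 1
  simp only [id, logFactor]
  field_simp
  ring

lemma regularizer_continuousOn (hN : 0 < N) :
    ContinuousOn (regularizer N) (Set.Icc (1 / N) (1 + 1 / N)) := fun _ hu =>
  (hasDerivAt_regularizer (pos_of_one_div_le hN hu.1).ne').continuousAt.continuousWithinAt

lemma regularizer_monotoneOn (hN : 0 < N) :
    MonotoneOn (regularizer N) (Set.Icc (1 / N) (1 + 1 / N)) := by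
  refine monotoneOn_of_hasDerivWithinAt_nonneg (convex_Icc _ _) (regularizer_continuousOn hN)
    (f' := fun u => logFactor N u - 1) (fun u hu => ?_) fun u hu => ?_
  · exact (hasDerivAt_regularizer
      (pos_of_one_div_le hN (interior_subset hu).1).ne').hasDerivWithinAt
  · exact sub_nonneg.2 (logFactor_mem_Icc hN (interior_subset hu)).1

lemma hasDerivAt_potential (hN : 0 < N) (hu : u ∈ Set.Icc (1 / N) (1 + 1 / N)) :
    HasDerivAt (potential N p)
      (competitiveRatio N ^ p * (p * u ^ (p - 1))
        - (1 - p) * ((logFactor N u - 1) * p * regularizer N u ^ (p - 1))) u := by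
  have hu0 := (pos_of_one_div_le hN hu.1).ne'
  exact ((hasDerivAt_rpow_const (Or.inl hu0)).const_mul _).sub
    (((hasDerivAt_regularizer hu0).rpow_const (Or.inl (regularizer_pos hN hu).ne')).const_mul _)

lemma mul_regularizer_rpow_le_deriv_potential (hN : 0 < N) (hp : 0 ≤ p)
    (hu : u ∈ Set.Icc (1 / N) (1 + 1 / N)) :
    p * regularizer N u ^ (p - 1) ≤ deriv (potential N p) u := by
  have hu0 : 0 < u := pos_of_one_div_le hN hu.1
  obtain ⟨hL1, hLα⟩ := logFactor_mem_Icc hN hu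
  have hL0 : 0 ≤ logFactor N u := zero_le_one.trans hL1
  have hfactor : logFactor N u ^ (p - 1) * (1 + (1 - p) * (logFactor N u - 1)) ≤
      competitiveRatio N ^ p :=
    (rpow_sub_one_mul_le hp hL1).trans (rpow_le_rpow hL0 hLα hp)
  have hscaled := mul_le_mul_of_nonneg_left hfactor (by positivity : 0 ≤ p * u ^ (p - 1))
  rw [(hasDerivAt_potential hN hu).deriv, regularizer, mul_rpow hu0.le hL0]
  linarith

lemma potential_monotoneOn (hN : 0 < N) (hp : 0 ≤ p) :
    MonotoneOn (potential N p) (Set.Icc (1 / N) (1 + 1 / N)) := by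
  have hdiff {u : ℝ} (hu : u ∈ Set.Icc (1 / N) (1 + 1 / N)) :
      DifferentiableAt ℝ (potential N p) u := (hasDerivAt_potential hN hu).differentiableAt
  refine monotoneOn_of_deriv_nonneg (convex_Icc _ _)
    (fun u hu => (hdiff hu).continuousAt.continuousWithinAt)
    (fun u hu => (hdiff (interior_subset hu)).differentiableWithinAt) fun u hu => ?_
  have hpos := regularizer_pos hN (interior_subset hu)
  exact (by positivity : 0 ≤ p * regularizer N u ^ (p - 1)).trans
    (mul_regularizer_rpow_le_deriv_potential hN hp (interior_subset hu))

lemma potential_one_div_nonneg (hN : 0 < N) (hp : 0 ≤ p) : 0 ≤ potential N p (1 / N) := by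
  have hα := one_le_competitiveRatio hN.le
  calc 0 ≤ p * ((1 / N) ^ p * competitiveRatio N ^ p) := by positivity
    _ = potential N p (1 / N) := by
        rw [potential, regularizer, logFactor_one_div hN,
          mul_rpow (by positivity) (by positivity)]
        ring

end Regularizer

section SingleAgent

/-- A valuation on `[0, T]` whose monopolist utility is at most one. -/
structure IsValuation (T : ℝ) (v : ℝ → ℝ) : Prop where
  ae_nonneg : ∀ᵐ s ∂volume.restrict (Set.Icc 0 T), 0 ≤ v s
  integrableOn : IntegrableOn v (Set.Icc 0 T)
  integral_le_one : ∫ s in (0 : ℝ)..T, v s ≤ 1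

/-- The share of the good that a single agent receives over `[0, T]`. -/
structure IsShare (T : ℝ) (x : ℝ → ℝ) : Prop where
  aestronglyMeasurable : AEStronglyMeasurable x (volume.restrict (Set.Icc 0 T))
  ae_mem_Icc : ∀ᵐ s ∂volume.restrict (Set.Icc 0 T), x s ∈ Set.Icc 0 1

/-- The utility at time `t` of an agent with valuation `v` and share `x`. -/
noncomputable def utility (v x : ℝ → ℝ) (t : ℝ) : ℝ := ∫ s in (0 : ℝ)..t, v s * x s

/-- The utility at time `t` increased by the base utility `1 / N`. -/
noncomputable def baseUtility (N : ℝ) (v x : ℝ → ℝ) (t : ℝ) : ℝ := 1 / N + utility v x t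

/-- The weight that Regularized Greedy gives at time `s` to an agent with valuation `v` and
share `x`. -/
noncomputable def greedyWeight (N p : ℝ) (v x : ℝ → ℝ) (s : ℝ) : ℝ :=
  regularizer N (baseUtility N v x s) ^ (p - 1)

variable {N p T : ℝ} {v x z : ℝ → ℝ}

lemma ae_mul_nonneg (hv : IsValuation T v) (hx : IsShare T x) :
    ∀ᵐ s ∂volume.restrict (Set.Icc 0 T), 0 ≤ v s * x s := by
  filter_upwards [hv.ae_nonneg, hx.ae_mem_Icc] with s hvs hxs using mul_nonneg hvs hxs.1

lemma intervalIntegrable_mul (hT : 0 ≤ T) (hv : IsValuation T v) (hx : IsShare T x) :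
    IntervalIntegrable (fun s => v s * x s) volume 0 T := by
  rw [intervalIntegrable_iff_integrableOn_Icc_of_le hT]
  refine hv.integrableOn.mul_bdd (c := 1) hx.aestronglyMeasurable ?_
  filter_upwards [hx.ae_mem_Icc] with s hs
  exact (norm_of_nonneg hs.1).trans_le hs.2

lemma utility_zero : utility v x 0 = 0 := intervalIntegral.integral_same

lemma utility_continuousOn (hT : 0 ≤ T) (hv : IsValuation T v) (hx : IsShare T x) :
    ContinuousOn (utility v x) (Set.Icc 0 T) := by
  have h := intervalIntegral.continuousOn_primitive_interval' (intervalIntegrable_mul hT hv hx)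
    Set.left_mem_uIcc
  rwa [Set.uIcc_of_le hT] at h

lemma utility_monotoneOn (hv : IsValuation T v) (hx : IsShare T x) :
    MonotoneOn (utility v x) (Set.Icc 0 T) := by
  intro s hs t ht hst
  have hint : IntervalIntegrable (fun r => v r * x r) volume 0 t := by
    refine (intervalIntegrable_mul (ht.1.trans ht.2) hv hx).mono_set ?_
    rw [Set.uIcc_of_le ht.1, Set.uIcc_of_le (ht.1.trans ht.2)]
    exact Set.Icc_subset_Icc_right ht.2
  have hnonneg : ∀ᵐ r ∂volume.restrict (Set.Ioc 0 t), 0 ≤ v r * x r :=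
    ae_restrict_of_ae_restrict_of_subset
      (Set.Ioc_subset_Icc_self.trans (Set.Icc_subset_Icc_right ht.2)) (ae_mul_nonneg hv hx)
  exact intervalIntegral.integral_mono_interval le_rfl hs.1 hst hnonneg hint

lemma utility_mem_Icc (hv : IsValuation T v) (hx : IsShare T x) {t : ℝ} (ht : t ∈ Set.Icc 0 T) :
    utility v x t ∈ Set.Icc 0 1 := by
  have hT : 0 ≤ T := ht.1.trans ht.2
  have hmono := utility_monotoneOn hv hx
  have hutility_le : utility v x T ≤ ∫ s in (0 : ℝ)..T, v s := by
    refine intervalIntegral.integral_mono_ae_restrict hT (intervalIntegrable_mul hT hv hx)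
      ((intervalIntegrable_iff_integrableOn_Icc_of_le hT).2 hv.integrableOn) ?_
    filter_upwards [hv.ae_nonneg, hx.ae_mem_Icc] with s hvs hxs
      using mul_le_of_le_one_right hvs hxs.2
  exact ⟨utility_zero.ge.trans (hmono (Set.left_mem_Icc.2 hT) ht ht.1),
    (hmono ht (Set.right_mem_Icc.2 hT) ht.2).trans (hutility_le.trans hv.integral_le_one)⟩

lemma baseUtility_zero : baseUtility N v x 0 = 1 / N := by
  rw [baseUtility, utility_zero, add_zero]

lemma baseUtility_continuousOn (hT : 0 ≤ T) (hv : IsValuation T v) (hx : IsShare T x) :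
    ContinuousOn (baseUtility N v x) (Set.Icc 0 T) :=
  continuousOn_const.add (utility_continuousOn hT hv hx)

lemma baseUtility_monotoneOn (hv : IsValuation T v) (hx : IsShare T x) :
    MonotoneOn (baseUtility N v x) (Set.Icc 0 T) :=
  (utility_monotoneOn hv hx).const_add (1 / N)

lemma baseUtility_mapsTo_Icc (hv : IsValuation T v) (hx : IsShare T x) :
    Set.MapsTo (baseUtility N v x) (Set.Icc 0 T) (Set.Icc (1 / N) (1 + 1 / N)) := by
  intro t ht
  obtain ⟨hnonneg, hle⟩ := utility_mem_Icc hv hx ht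
  rw [baseUtility]
  constructor <;> linarith

lemma ae_hasDerivAt_baseUtility (hT : 0 ≤ T) (hv : IsValuation T v) (hx : IsShare T x) :
    ∀ᵐ s ∂volume.restrict (Set.Icc 0 T), HasDerivAt (baseUtility N v x) (v s * x s) s := by
  have hderiv := (intervalIntegrable_mul hT hv hx).ae_hasDerivAt_integral
  rw [Set.uIcc_of_le hT] at hderiv
  filter_upwards [ae_restrict_of_ae hderiv, ae_restrict_mem measurableSet_Icc] with s hs hsT
    using (hs hsT 0 (Set.left_mem_Icc.2 hT)).const_add (1 / N)

lemma regularizer_baseUtility_pos (hN : 0 < N) (hv : IsValuation T v) (hx : IsShare T x) {s : ℝ}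
    (hs : s ∈ Set.Icc 0 T) : 0 < regularizer N (baseUtility N v x s) :=
  regularizer_pos hN (baseUtility_mapsTo_Icc hv hx hs)

lemma greedyWeight_continuousOn (hT : 0 ≤ T) (hN : 0 < N) (hv : IsValuation T v)
    (hx : IsShare T x) : ContinuousOn (greedyWeight N p v x) (Set.Icc 0 T) :=
  ((regularizer_continuousOn hN).comp (baseUtility_continuousOn hT hv hx)
    (baseUtility_mapsTo_Icc hv hx)).rpow_const
      fun _ hs => Or.inl (regularizer_baseUtility_pos hN hv hx hs).ne'

lemma greedyWeight_antitoneOn (hN : 0 < N) (hp : p ≤ 1) (hv : IsValuation T v)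
    (hx : IsShare T x) : AntitoneOn (greedyWeight N p v x) (Set.Icc 0 T) :=
  fun _ hs _ ht hst => rpow_le_rpow_of_nonpos (regularizer_baseUtility_pos hN hv hx hs)
    (regularizer_monotoneOn hN (baseUtility_mapsTo_Icc hv hx hs) (baseUtility_mapsTo_Icc hv hx ht)
      (baseUtility_monotoneOn hv hx hs ht hst)) (sub_nonpos.2 hp)

lemma intervalIntegrable_mul_greedyWeight (hT : 0 ≤ T) (hN : 0 < N) (hv : IsValuation T v)
    (hx : IsShare T x) (hz : IsShare T z) :
    IntervalIntegrable (fun s => v s * z s * greedyWeight N p v x s) volume 0 T :=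
  (intervalIntegrable_mul hT hv hz).mul_continuousOn
    (by simpa only [Set.uIcc_of_le hT] using greedyWeight_continuousOn hT hN hv hx)

lemma greedyWeight_mul_utility_le (hT : 0 ≤ T) (hN : 0 < N) (hp : p ≤ 1) (hv : IsValuation T v)
    (hx : IsShare T x) (hz : IsShare T z) :
    greedyWeight N p v x T * utility v z T ≤
      ∫ s in (0 : ℝ)..T, v s * z s * greedyWeight N p v x s := by
  rw [utility, mul_comm, ← intervalIntegral.integral_mul_const]
  refine intervalIntegral.integral_mono_ae_restrict hT
    ((intervalIntegrable_mul hT hv hz).mul_const _)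
    (intervalIntegrable_mul_greedyWeight hT hN hv hx hz) ?_
  filter_upwards [ae_mul_nonneg hv hz, ae_restrict_mem measurableSet_Icc] with s hgain hs
  exact mul_le_mul_of_nonneg_left
    (greedyWeight_antitoneOn hN hp hv hx hs (Set.right_mem_Icc.2 hT) hs.2) hgain

lemma mul_integral_greedyWeight_le_potential (hT : 0 ≤ T) (hN : 0 < N) (hp : 0 ≤ p)
    (hv : IsValuation T v) (hx : IsShare T x) :
    p * ∫ s in (0 : ℝ)..T, v s * x s * greedyWeight N p v x s ≤
      potential N p (baseUtility N v x T) := by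
  have hmaps := baseUtility_mapsTo_Icc (N := N) hv hx
  have hmono : MonotoneOn (potential N p ∘ baseUtility N v x) (Set.Icc 0 T) :=
    (potential_monotoneOn hN hp).comp (baseUtility_monotoneOn hv hx) hmaps
  have hderiv : ∀ᵐ s ∂volume.restrict (Set.Icc 0 T),
      HasDerivAt (potential N p ∘ baseUtility N v x)
        (deriv (potential N p) (baseUtility N v x s) * (v s * x s)) s := by
    filter_upwards [ae_hasDerivAt_baseUtility hT hv hx, ae_restrict_mem measurableSet_Icc]
      with s hs hsT
    exact (hasDerivAt_potential hN (hmaps hsT)).differentiableAt.hasDerivAt.comp s hs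
  have hle : ∀ᵐ s ∂volume.restrict (Set.Icc 0 T), p * (v s * x s * greedyWeight N p v x s) ≤
      deriv (potential N p) (baseUtility N v x s) * (v s * x s) := by
    filter_upwards [ae_mul_nonneg hv hx, ae_restrict_mem measurableSet_Icc] with s hgain hsT
    rw [mul_left_comm, mul_comm]
    exact mul_le_mul_of_nonneg_right
      (mul_regularizer_rpow_le_deriv_potential hN hp (hmaps hsT)) hgain
  rw [← intervalIntegral.integral_const_mul]
  calc ∫ s in (0 : ℝ)..T, p * (v s * x s * greedyWeight N p v x s)
      ≤ potential N p (baseUtility N v x T) - potential N p (baseUtility N v x 0) :=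
        integral_le_sub_of_monotoneOn hT hmono
          ((intervalIntegrable_mul_greedyWeight hT hN hv hx hx).const_mul p) hderiv hle
    _ ≤ potential N p (baseUtility N v x T) := by
        rw [baseUtility_zero]
        exact sub_le_self _ (potential_one_div_nonneg hN hp)

lemma utility_le_competitiveRatio_mul_baseUtility (hT : 0 ≤ T) (hN : 0 < N)
    (hNα : N ≤ competitiveRatio N) (hv : IsValuation T v) (hx : IsShare T x)
    (hz : IsShare T z) : utility v z T ≤ competitiveRatio N * baseUtility N v x T := by
  have hTmem := Set.right_mem_Icc.2 hT
  calc utility v z T ≤ 1 := (utility_mem_Icc hv hz hTmem).2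
    _ = N * (1 / N) := (mul_one_div_cancel hN.ne').symm
    _ ≤ competitiveRatio N * baseUtility N v x T :=
        mul_le_mul hNα (baseUtility_mapsTo_Icc hv hx hTmem).1 (by positivity) (hN.le.trans hNα)

end SingleAgent

section Allocation

variable {ι : Type*} [Fintype ι] {N p T : ℝ} {v x xstar : ι → ℝ → ℝ}

/-- A feasible allocation of the good arriving over `[0, T]` among the agents `ι`. Measurability and
the bounds on the shares are required only up to null sets. -/
structure IsFeasible (T : ℝ) (x : ι → ℝ → ℝ) : Prop where
  aestronglyMeasurable : ∀ a, AEStronglyMeasurable (x a) (volume.restrict (Set.Icc 0 T))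
  ae_nonneg_sum_le_one : ∀ᵐ s ∂volume.restrict (Set.Icc 0 T), (∀ a, 0 ≤ x a s) ∧ ∑ a, x a s ≤ 1

/-- The Regularized Greedy condition with base utility `1 / N`: almost always the whole good goes to
agents with maximal `v a s * γ (U a s) ^ (p - 1)`, stated without division. -/
def IsRegularizedGreedy (N p T : ℝ) (v x : ι → ℝ → ℝ) : Prop :=
  ∀ᵐ s ∂volume.restrict (Set.Icc 0 T), ∑ a, x a s = 1 ∧ ∀ a b, 0 < x a s →
    v b s * regularizer N (baseUtility N (v a) (x a) s) ^ (1 - p) ≤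
      v a s * regularizer N (baseUtility N (v b) (x b) s) ^ (1 - p)

lemma IsFeasible.isShare (hx : IsFeasible T x) (a : ι) : IsShare T (x a) where
  aestronglyMeasurable := hx.aestronglyMeasurable a
  ae_mem_Icc := by
    filter_upwards [hx.ae_nonneg_sum_le_one] with s ⟨hnonneg, hsum⟩
    exact ⟨hnonneg a,
      (Finset.single_le_sum (fun b _ => hnonneg b) (Finset.mem_univ a)).trans hsum⟩

lemma IsRegularizedGreedy.ae_mul_greedyWeight_le (hgreedy : IsRegularizedGreedy N p T v x)
    (hN : 0 < N) (hv : ∀ a, IsValuation T (v a)) (hx : IsFeasible T x) :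
    ∀ᵐ s ∂volume.restrict (Set.Icc 0 T), ∀ a b, 0 < x a s →
      v b s * greedyWeight N p (v b) (x b) s ≤ v a s * greedyWeight N p (v a) (x a) s := by
  filter_upwards [hgreedy, ae_restrict_mem measurableSet_Icc] with s ⟨_, hs⟩ hsT a b hab
  have hpos (c : ι) := regularizer_baseUtility_pos hN (hv c) (hx.isShare c) hsT
  have hinv (c : ι) : greedyWeight N p (v c) (x c) s =
      (regularizer N (baseUtility N (v c) (x c) s) ^ (1 - p))⁻¹ := by
    rw [greedyWeight, ← rpow_neg (hpos c).le, neg_sub]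
  rw [hinv, hinv, ← div_eq_mul_inv, ← div_eq_mul_inv,
    div_le_div_iff₀ (rpow_pos_of_pos (hpos b) _) (rpow_pos_of_pos (hpos a) _)]
  exact hs a b hab

lemma IsRegularizedGreedy.sum_integral_greedyWeight_le (hgreedy : IsRegularizedGreedy N p T v x)
    (hT : 0 ≤ T) (hN : 0 < N) (hv : ∀ a, IsValuation T (v a)) (hx : IsFeasible T x)
    (hxstar : IsFeasible T xstar) :
    ∑ a, ∫ s in (0 : ℝ)..T, v a s * xstar a s * greedyWeight N p (v a) (x a) s ≤
      ∑ a, ∫ s in (0 : ℝ)..T, v a s * x a s * greedyWeight N p (v a) (x a) s := by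
  have hint {z : ι → ℝ → ℝ} (hz : IsFeasible T z) (a : ι) :=
    intervalIntegrable_mul_greedyWeight (p := p) hT hN (hv a) (hx.isShare a) (hz.isShare a)
  have hint_sum {z : ι → ℝ → ℝ} (hz : IsFeasible T z) : IntervalIntegrable
      (fun s => ∑ a, v a s * z a s * greedyWeight N p (v a) (x a) s) volume 0 T := by
    simpa only [Finset.sum_fn] using IntervalIntegrable.sum Finset.univ fun a _ => hint hz a
  rw [← intervalIntegral.integral_finsetSum fun a _ => hint hxstar a,
    ← intervalIntegral.integral_finsetSum fun a _ => hint hx a]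
  refine intervalIntegral.integral_mono_ae_restrict hT (hint_sum hxstar) (hint_sum hx) ?_
  filter_upwards [hgreedy, hgreedy.ae_mul_greedyWeight_le hN hv hx, hx.ae_nonneg_sum_le_one,
    hxstar.ae_nonneg_sum_le_one, ae_all_iff.2 fun a => (hv a).ae_nonneg,
    ae_restrict_mem measurableSet_Icc] with s ⟨hsum, _⟩ hmax hxs hxstars hvs hsT
  have hweight (a : ι) : 0 ≤ v a s * greedyWeight N p (v a) (x a) s := mul_nonneg (hvs a)
    (rpow_nonneg (regularizer_baseUtility_pos hN (hv a) (hx.isShare a) hsT).le _)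
  simpa only [mul_right_comm] using
    sum_mul_le_sum_mul_of_argmax hxs.1 hsum hweight hmax hxstars.1 hxstars.2

theorem IsRegularizedGreedy.sum_utility_rpow_le (hgreedy : IsRegularizedGreedy N p T v x)
    (hT : 0 ≤ T) (hN : 0 < N) (hp0 : 0 ≤ p) (hp1 : p ≤ 1) (hv : ∀ a, IsValuation T (v a))
    (hx : IsFeasible T x) (hxstar : IsFeasible T xstar) :
    ∑ a, utility (v a) (xstar a) T ^ p ≤
      ∑ a, (competitiveRatio N * baseUtility N (v a) (x a) T) ^ p := by
  have hTmem := Set.right_mem_Icc.2 hT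
  have hα : 0 ≤ competitiveRatio N := zero_le_one.trans (one_le_competitiveRatio hN.le)
  have hγ (a : ι) := regularizer_baseUtility_pos hN (hv a) (hx.isShare a) hTmem
  have hU (a : ι) : 0 ≤ baseUtility N (v a) (x a) T :=
    (pos_of_one_div_le hN (baseUtility_mapsTo_Icc (hv a) (hx.isShare a) hTmem).1).le
  have hwelfare : ∑ a, greedyWeight N p (v a) (x a) T * utility (v a) (xstar a) T ≤
      ∑ a, ∫ s in (0 : ℝ)..T, v a s * x a s * greedyWeight N p (v a) (x a) s :=
    (Finset.sum_le_sum fun a _ => greedyWeight_mul_utility_le hT hN hp1 (hv a) (hx.isShare a)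
      (hxstar.isShare a)).trans (hgreedy.sum_integral_greedyWeight_le hT hN hv hx hxstar)
  calc ∑ a, utility (v a) (xstar a) T ^ p
      ≤ ∑ a, ((1 - p) * regularizer N (baseUtility N (v a) (x a) T) ^ p +
          p * (greedyWeight N p (v a) (x a) T * utility (v a) (xstar a) T)) :=
        Finset.sum_le_sum fun a _ => rpow_le_tangent hp0 hp1
          (utility_mem_Icc (hv a) (hxstar.isShare a) hTmem).1 (hγ a)
    _ ≤ ∑ a, ((1 - p) * regularizer N (baseUtility N (v a) (x a) T) ^ p +
          p * ∫ s in (0 : ℝ)..T, v a s * x a s * greedyWeight N p (v a) (x a) s) := by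
        simp only [Finset.sum_add_distrib, ← Finset.mul_sum]
        gcongr
    _ ≤ ∑ a, ((1 - p) * regularizer N (baseUtility N (v a) (x a) T) ^ p +
          potential N p (baseUtility N (v a) (x a) T)) := by
        gcongr with a
        exact mul_integral_greedyWeight_le_potential hT hN hp0 (hv a) (hx.isShare a)
    _ = ∑ a, (competitiveRatio N * baseUtility N (v a) (x a) T) ^ p := by
        simp only [potential, add_sub_cancel, fun a => mul_rpow (z := p) hα (hU a)]

/-- If `N ≤ competitiveRatio N`, then the base utilities alone give the bound. -/
theorem stmt_19_general [Nonempty ι] (hT : 0 ≤ T) (hN : 0 < N) (hp0 : 0 < p)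
    (hp : p ≤ 1 ∨ N ≤ competitiveRatio N) (hv : ∀ a, IsValuation T (v a)) (hx : IsFeasible T x)
    (hgreedy : IsRegularizedGreedy N p T v x) (hxstar : IsFeasible T xstar) :
    pMean p (fun a => utility (v a) (xstar a) T) / competitiveRatio N ≤
      pMean p (fun a => baseUtility N (v a) (x a) T) := by
  have hTmem := Set.right_mem_Icc.2 hT
  have hα : 0 < competitiveRatio N := one_pos.trans_le (one_le_competitiveRatio hN.le)
  have hU (a : ι) : 0 ≤ baseUtility N (v a) (x a) T :=
    (pos_of_one_div_le hN (baseUtility_mapsTo_Icc (hv a) (hx.isShare a) hTmem).1).le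
  have hUstar (a : ι) : 0 ≤ utility (v a) (xstar a) T :=
    (utility_mem_Icc (hv a) (hxstar.isShare a) hTmem).1
  rw [div_le_iff₀' hα, ← pMean_const_mul hα.le hp0.ne' hU,
    pMean_le_pMean_iff hp0 hUstar fun a => mul_nonneg hα.le (hU a)]
  rcases hp with hp1 | hNα
  · exact hgreedy.sum_utility_rpow_le hT hN hp0.le hp1 hv hx hxstar
  · gcongr with a
    · exact hUstar a
    · exact utility_le_competitiveRatio_mul_baseUtility hT hN hNα (hv a) (hx.isShare a)
        (hxstar.isShare a)

end Allocation

theorem stmt_19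
    (n : ℕ) (hn : 2 ≤ n) (T : ℝ) (hT : 0 < T)
    (v : Fin n → ℝ → ℝ)
    (hv_meas : ∀ a, Measurable (v a))
    (hv_nonneg : ∀ a, ∀ᵐ s ∂(volume.restrict (Set.Icc (0:ℝ) T)), 0 ≤ v a s)
    (hv_int : ∀ a, IntegrableOn (v a) (Set.Icc (0:ℝ) T))
    (hv_unit : ∀ a, ∫ s in (0:ℝ)..T, v a s = 1)
    (p : ℝ) (hp0 : 0 < p) (hp : p ≤ 1 / Real.log n)
    (γ : ℝ → ℝ)
    (hγ : ∀ u : ℝ, γ u = u * (1 + Real.log (1 + 1 / (n : ℝ)) - Real.log u))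
    (x : Fin n → ℝ → ℝ)
    (hx_meas : ∀ a, Measurable (x a))
    (hx_feas : ∀ᵐ s ∂(volume.restrict (Set.Icc (0:ℝ) T)),
      (∀ a, 0 ≤ x a s) ∧ ∑ a, x a s ≤ 1)
    (U : Fin n → ℝ → ℝ)
    (hU : ∀ a t, U a t = 1 / (n : ℝ) + ∫ s in (0:ℝ)..t, v a s * x a s)
    (hgreedy : ∀ᵐ s ∂(volume.restrict (Set.Icc (0:ℝ) T)),
      (∑ a, x a s = 1) ∧
      ∀ a b, 0 < x a s →
        v a s * (γ (U b s)) ^ (1 - p) ≥ v b s * (γ (U a s)) ^ (1 - p))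
    (xstar : Fin n → ℝ → ℝ)
    (hxstar_meas : ∀ a, Measurable (xstar a))
    (hxstar_feas : ∀ᵐ s ∂(volume.restrict (Set.Icc (0:ℝ) T)),
      (∀ a, 0 ≤ xstar a s) ∧ ∑ a, xstar a s ≤ 1)
    (Ustar : Fin n → ℝ)
    (hUstar : ∀ a, Ustar a = ∫ s in (0:ℝ)..T, v a s * xstar a s) :
    ((1 / (n : ℝ)) * ∑ a, (U a T) ^ p) ^ (1 / p) ≥
      ((1 / (n : ℝ)) * ∑ a, (Ustar a) ^ p) ^ (1 / p) /
        (Real.log ((n : ℝ) + 1) + 1) := by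
  obtain rfl : γ = regularizer n := funext hγ
  obtain rfl : U = fun a => baseUtility n (v a) (x a) := by
    ext a t
    exact hU a t
  obtain rfl : Ustar = fun a => utility (v a) (xstar a) T := funext hUstar
  have : Nonempty (Fin n) := ⟨⟨0, by omega⟩⟩
  have hbound := stmt_19_general (N := n) hT.le (by positivity) hp0
    ((le_or_gt n 2).symm.imp (fun hn2 => hp.trans (one_div_log_natCast_le_one hn2))
      natCast_le_competitiveRatio_of_le_two)
    (fun a => ⟨hv_nonneg a, hv_int a, (hv_unit a).le⟩)
    ⟨fun a => (hx_meas a).aestronglyMeasurable, hx_feas⟩ hgreedy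
    ⟨fun a => (hxstar_meas a).aestronglyMeasurable, hxstar_feas⟩
  simpa only [pMean, Fintype.card_fin, competitiveRatio, ge_iff_le] using hbound
end
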